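/- arXiv:1509.03812 — 2 statements merged into one kernel-verified Lean document; each statement's English description precedes it below -/
import Mathlib

section
/- The state-independent error admits the closed form ε(𝒜,𝒜') = max_{1≤i≤d} √(1 − |⟨a'_i, a_i⟩|²). -/
/-!
For every vector `v`, `tr (ρ |v⟩⟨v|) = ⟪v, ρ v⟫`, so everything reduces to bounding
`⟪u, ρ u⟫ - ⟪v, ρ v⟫` for unit vectors `u = a i`, `v = a' i`.

Upper bound: diagonalising `ρ` writes this difference as a convex combination of the numbers
`|⟪e, u⟫|² - |⟪e, v⟫|²` with `e` a unit eigenvector, and each of them is at most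
`√(1 - |⟪v, u⟫|²)` in absolute value (`abs_sq_sub_sq_le`). The latter follows from
the Cauchy–Schwarz inequality for the components of `u` and `v` orthogonal to `e`, together with
trigonometry: it is `|cos² α - cos² β| = |sin (α + β) sin (α - β)| ≤ |sin (α - β)|`.

Attainment: with `c = ⟪v, u⟫` and `s = √(1 - |c|²)`, the vector `(1 + s) u - c v` is an
eigenvector of `|u⟩⟨u| - |v⟩⟨v|` with eigenvalue `s`; its normalisation is a pure state realising
the bound (`exists_unit_attaining`).
-/

open scoped ComplexInnerProductSpace

noncomputable section

variable {H : Type*} [NormedAddCommGroup H] [InnerProductSpace ℂ H] [FiniteDimensional ℂ H]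
variable {ι ι' : Type*} [Fintype ι] [Fintype ι']

/-- The rank-one projector `|v⟩⟨v|`. -/
def ketbra (v : H) : H →ₗ[ℂ] H where
  toFun x := ⟪v, x⟫ • v
  map_add' x y := by simp [inner_add_right, add_smul]
  map_smul' c x := by simp [inner_smul_right, mul_smul]

/-- A density operator: self-adjoint, positive semidefinite, trace one. -/
def IsDensity (ρ : H →ₗ[ℂ] H) : Prop :=
  LinearMap.IsSymmetric ρ ∧ (∀ x : H, 0 ≤ (⟪x, ρ x⟫).re) ∧
    LinearMap.trace ℂ H ρ = 1

/-- The state-dependent error `ε_ρ(𝒜,𝒜')`. -/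
def sdError (a a' : ι → H) (ρ : H →ₗ[ℂ] H) : ℝ :=
  ⨆ i : ι, ‖LinearMap.trace ℂ H (ρ ∘ₗ (ketbra (a i) - ketbra (a' i)))‖

/-- The state-independent error `ε(𝒜,𝒜')`. -/
def siError (a a' : ι → H) : ℝ :=
  ⨆ ρ : {ρ : H →ₗ[ℂ] H // IsDensity ρ}, sdError a a' ρ.1

/-- The operator `|b_i⟩⟨b_i| − Σ_j |⟨a'_j, b_i⟩|² |a'_j⟩⟨a'_j|`. -/
def distOp (a' : ι' → H) (b : ι → H) (i : ι) : H →ₗ[ℂ] H :=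
  ketbra (b i) - ∑ j : ι', (‖⟪a' j, b i⟫‖ ^ 2 : ℂ) • ketbra (a' j)

/-- The state-dependent disturbance `η_ρ(𝒜',ℬ)`. -/
def sdDist (a' : ι' → H) (b : ι → H) (ρ : H →ₗ[ℂ] H) : ℝ :=
  ⨆ i : ι, ‖LinearMap.trace ℂ H (ρ ∘ₗ distOp a' b i)‖

/-- The state-independent disturbance `η(𝒜',ℬ)`. -/
def siDist (a' : ι' → H) (b : ι → H) : ℝ :=
  ⨆ ρ : {ρ : H →ₗ[ℂ] H // IsDensity ρ}, sdDist a' b ρ.1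

/-- The state-independent overall error `Δ(𝒜,𝒜',ℬ)`. -/
def siOverall (a a' b : ι → H) : ℝ :=
  ⨆ ρ : {ρ : H →ₗ[ℂ] H // IsDensity ρ}, (sdError a a' ρ.1 + sdDist a' b ρ.1)

lemma trace_comp_ketbra (ρ : H →ₗ[ℂ] H) (v : H) :
    LinearMap.trace ℂ H (ρ ∘ₗ ketbra v) = ⟪v, ρ v⟫ := by
  rw [LinearMap.trace_eq_sum_inner _ (stdOrthonormalBasis ℂ H),
    ← (stdOrthonormalBasis ℂ H).sum_inner_mul_inner v (ρ v)]
  refine Finset.sum_congr rfl fun i _ => ?_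
  simp [ketbra, inner_smul_right]

lemma trace_ketbra (v : H) : LinearMap.trace ℂ H (ketbra v) = ⟪v, v⟫ := by
  simpa using trace_comp_ketbra LinearMap.id v

lemma inner_ketbra (e x y : H) : ⟪x, ketbra e y⟫ = ⟪e, y⟫ * ⟪x, e⟫ := by
  simp [ketbra]

lemma inner_ketbra_self (e x : H) : ⟪x, ketbra e x⟫ = ((‖⟪e, x⟫‖ ^ 2 : ℝ) : ℂ) := by
  rw [inner_ketbra, ← inner_conj_symm x e, Complex.mul_conj, Complex.normSq_eq_norm_sq]

/-- Pure states are density operators. -/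
lemma isDensity_ketbra {e : H} (he : ‖e‖ = 1) : IsDensity (ketbra e) := by
  refine ⟨fun x y => ?_, fun x => ?_, ?_⟩
  · rw [inner_ketbra, ← inner_conj_symm, inner_ketbra, map_mul, inner_conj_symm, inner_conj_symm,
      mul_comm]
  · rw [inner_ketbra_self, Complex.ofReal_re]
    positivity
  · rw [trace_ketbra, inner_self_eq_norm_sq_to_K, he]
    simp

lemma norm_sub_inner_smul_sq {e u : H} (he : ‖e‖ = 1) (hu : ‖u‖ = 1) :
    ‖u - ⟪e, u⟫ • e‖ ^ 2 = 1 - ‖⟪e, u⟫‖ ^ 2 := by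
  rw [@norm_sub_sq ℂ, norm_smul, he, hu, inner_smul_right, ← inner_conj_symm u e, Complex.mul_conj,
    Complex.normSq_eq_norm_sq]
  simp only [RCLike.re_to_complex, Complex.ofReal_re]
  ring

/-- Cauchy–Schwarz for the components of `u` and `v` orthogonal to `e`; geometrically, the spherical
triangle inequality for the angles between the lines through `v`, `e` and `u`. -/
lemma norm_inner_le_add {e u v : H} (he : ‖e‖ = 1) (hu : ‖u‖ = 1) (hv : ‖v‖ = 1) :
    ‖⟪v, u⟫‖ ≤ ‖⟪e, u⟫‖ * ‖⟪e, v⟫‖ +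
      √(1 - ‖⟪e, u⟫‖ ^ 2) * √(1 - ‖⟪e, v⟫‖ ^ 2) := by
  rw [← norm_sub_inner_smul_sq he hu, ← norm_sub_inner_smul_sq he hv,
    Real.sqrt_sq (norm_nonneg _), Real.sqrt_sq (norm_nonneg _)]
  have hee : ⟪e, e⟫ = 1 := by rw [inner_self_eq_norm_sq_to_K, he]; simp
  have key : ⟪v, u⟫ = ⟪e, u⟫ * ⟪v, e⟫ + ⟪v - ⟪e, v⟫ • e, u - ⟪e, u⟫ • e⟫ := by
    simp only [inner_sub_left, inner_sub_right, inner_smul_left, inner_smul_right, hee,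
      inner_conj_symm]
    ring
  calc ‖⟪v, u⟫‖ ≤ ‖⟪e, u⟫ * ⟪v, e⟫‖ + ‖⟪v - ⟪e, v⟫ • e, u - ⟪e, u⟫ • e⟫‖ := by
        conv_lhs => rw [key]
        exact norm_add_le _ _
    _ ≤ _ := by
        rw [norm_mul, norm_inner_symm v e, mul_comm ‖u - _‖]
        gcongr
        exact norm_inner_le_norm _ _

lemma norm_inner_sq_le_one {u v : H} (hu : ‖u‖ = 1) (hv : ‖v‖ = 1) : ‖⟪v, u⟫‖ ^ 2 ≤ 1 := by
  have h := norm_inner_le_norm (𝕜 := ℂ) v u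
  rw [hu, hv, one_mul] at h
  exact pow_le_one₀ (norm_nonneg _) h

/-- The sharp bound on the error in a pure state `e`. -/
lemma abs_sq_sub_sq_le {e u v : H} (he : ‖e‖ = 1) (hu : ‖u‖ = 1) (hv : ‖v‖ = 1) :
    |‖⟪e, u⟫‖ ^ 2 - ‖⟪e, v⟫‖ ^ 2| ≤ √(1 - ‖⟪v, u⟫‖ ^ 2) := by
  have hC := norm_inner_le_add he hu hv
  have hR := Real.sq_sqrt (sub_nonneg.2 (norm_inner_sq_le_one hu he))
  have hS := Real.sq_sqrt (sub_nonneg.2 (norm_inner_sq_le_one hv he))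
  have hC0 := norm_nonneg ⟪v, u⟫
  set P := ‖⟪e, u⟫‖
  set Q := ‖⟪e, v⟫‖
  set C := ‖⟪v, u⟫‖
  set R := √(1 - P ^ 2)
  set S := √(1 - Q ^ 2)
  apply Real.abs_le_sqrt
  have h1 : C ^ 2 ≤ (P * Q + R * S) ^ 2 := by gcongr
  -- `P = cos α`, `R = sin α`, `Q = cos β`, `S = sin β`: three standard identities.
  have hsub : (P * Q + R * S) ^ 2 + (P * S - Q * R) ^ 2 = 1 := by
    linear_combination (P ^ 2 + R ^ 2) * hS + hR
  have hadd : (P * S + Q * R) ^ 2 ≤ 1 := by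
    have : (P * S + Q * R) ^ 2 + (P * Q - R * S) ^ 2 = 1 := by
      linear_combination (P ^ 2 + R ^ 2) * hS + hR
    nlinarith [sq_nonneg (P * Q - R * S)]
  have hprod : P ^ 2 - Q ^ 2 = (P * S + Q * R) * (P * S - Q * R) := by
    linear_combination Q ^ 2 * hR - P ^ 2 * hS
  calc (P ^ 2 - Q ^ 2) ^ 2 = (P * S + Q * R) ^ 2 * (P * S - Q * R) ^ 2 := by rw [hprod, mul_pow]
    _ ≤ 1 * (P * S - Q * R) ^ 2 := by gcongr
    _ ≤ 1 - C ^ 2 := by linarith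

/-- A pure state attaining the bound of `abs_sq_sub_sq_le`, which is trivial when it vanishes. -/
lemma exists_unit_attaining {u v : H} (hu : ‖u‖ = 1) (hv : ‖v‖ = 1)
    (hs : 0 < √(1 - ‖⟪v, u⟫‖ ^ 2)) :
    ∃ e : H, ‖e‖ = 1 ∧ ‖⟪e, u⟫‖ ^ 2 - ‖⟪e, v⟫‖ ^ 2 = √(1 - ‖⟪v, u⟫‖ ^ 2) := by
  have hs2 := Real.sq_sqrt (sub_nonneg.2 (norm_inner_sq_le_one hu hv))
  set s := √(1 - ‖⟪v, u⟫‖ ^ 2)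
  set c := ⟪v, u⟫ with hc
  have huu : ⟪u, u⟫ = 1 := by rw [inner_self_eq_norm_sq_to_K, hu]; simp
  have hvv : ⟪v, v⟫ = 1 := by rw [inner_self_eq_norm_sq_to_K, hv]; simp
  have huv : ⟪u, v⟫ = starRingEnd ℂ c := (inner_conj_symm u v).symm
  have hcc : c * starRingEnd ℂ c = 1 - (s : ℂ) ^ 2 := by
    rw [Complex.mul_conj, Complex.normSq_eq_norm_sq, ← Complex.ofReal_pow, hs2]
    push_cast
    ring
  set w : H := ((1 + s : ℝ) : ℂ) • u - c • v with hw
  have hwu : ⟪u, w⟫ = ((s * (1 + s) : ℝ) : ℂ) := by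
    rw [hw, inner_sub_right, inner_smul_right, inner_smul_right, huu, huv]
    push_cast
    linear_combination -hcc
  have hwv : ⟪v, w⟫ = s * c := by
    rw [hw, inner_sub_right, inner_smul_right, inner_smul_right, hvv, ← hc]
    push_cast
    ring
  have hww : ‖w‖ ^ 2 = 2 * s ^ 2 * (1 + s) := by
    have h : ⟪w, w⟫ = ((2 * s ^ 2 * (1 + s) : ℝ) : ℂ) := by
      conv_lhs => rw [hw, inner_sub_left, inner_smul_left, inner_smul_left, ← hw, hwu, hwv]
      rw [Complex.conj_ofReal]
      push_cast
      linear_combination -(s : ℂ) * hcc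
    rw [inner_self_eq_norm_sq_to_K] at h
    exact Complex.ofReal_injective (by simpa using h)
  have hwpos : 0 < ‖w‖ ^ 2 := by rw [hww]; positivity
  have hw0 : ‖w‖ ≠ 0 := fun h => by simp [h] at hwpos
  refine ⟨((‖w‖⁻¹ : ℝ) : ℂ) • w, ?_, ?_⟩
  · rw [norm_smul, Complex.norm_real, norm_inv, norm_norm, inv_mul_cancel₀ hw0]
  · rw [inner_smul_left, inner_smul_left, norm_mul, norm_mul, Complex.conj_ofReal,
      Complex.norm_real, norm_inv, norm_norm, norm_inner_symm w u, norm_inner_symm w v, hwu, hwv,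
      norm_mul, Complex.norm_real, Complex.norm_real, mul_pow, mul_pow, mul_pow, inv_pow, hww,
      Real.norm_eq_abs, Real.norm_eq_abs, sq_abs, sq_abs]
    have hn : ‖c‖ ^ 2 = 1 - s ^ 2 := by linarith
    rw [hn]
    field_simp
    ring

/-- The quadratic form of a symmetric operator, expanded in an eigenbasis. -/
lemma inner_apply_eq_sum {n : ℕ} {ρ : H →ₗ[ℂ] H} (hρ : ρ.IsSymmetric)
    (hn : Module.finrank ℂ H = n) (u : H) :
    ⟪u, ρ u⟫ = ((∑ k, hρ.eigenvalues hn k * ‖⟪hρ.eigenvectorBasis hn k, u⟫‖ ^ 2 : ℝ) : ℂ) := by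
  rw [← (hρ.eigenvectorBasis hn).sum_inner_mul_inner u (ρ u)]
  push_cast
  refine Finset.sum_congr rfl fun k _ => ?_
  rw [← hρ (hρ.eigenvectorBasis hn k) u, hρ.apply_eigenvectorBasis, inner_smul_left,
    ← inner_conj_symm u]
  have := Complex.mul_conj ⟪hρ.eigenvectorBasis hn k, u⟫
  rw [Complex.normSq_eq_norm_sq] at this
  push_cast at this
  rw [← this]
  simp
  ring

lemma norm_trace_le {ρ : H →ₗ[ℂ] H} (h : IsDensity ρ) {u v : H} (hu : ‖u‖ = 1) (hv : ‖v‖ = 1) :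
    ‖LinearMap.trace ℂ H (ρ ∘ₗ (ketbra u - ketbra v))‖ ≤ √(1 - ‖⟪v, u⟫‖ ^ 2) := by
  obtain ⟨hρ, hpos, htr⟩ := h
  set b := hρ.eigenvectorBasis rfl with hb
  set l := hρ.eigenvalues rfl with hl
  have hbn : ∀ k, ‖b k‖ = 1 := b.orthonormal.1
  have hlk : ∀ k, ⟪b k, ρ (b k)⟫ = (l k : ℂ) := fun k => by
    rw [hb, hρ.apply_eigenvectorBasis, inner_smul_right, inner_self_eq_norm_sq_to_K, ← hb, hbn]
    simp [hl]
  have hl0 : ∀ k, 0 ≤ l k := fun k => by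
    have := hpos (b k)
    rwa [hlk, Complex.ofReal_re] at this
  have hl1 : ∑ k, l k = 1 := by
    rw [LinearMap.trace_eq_sum_inner _ b] at htr
    simp_rw [hlk] at htr
    exact_mod_cast htr
  rw [LinearMap.comp_sub, map_sub, trace_comp_ketbra, trace_comp_ketbra,
    inner_apply_eq_sum hρ rfl, inner_apply_eq_sum hρ rfl, ← Complex.ofReal_sub, Complex.norm_real,
    Real.norm_eq_abs, ← Finset.sum_sub_distrib]
  calc _ ≤ ∑ k, |l k * ‖⟪b k, u⟫‖ ^ 2 - l k * ‖⟪b k, v⟫‖ ^ 2| := Finset.abs_sum_le_sum_abs _ _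
    _ ≤ ∑ k, l k * √(1 - ‖⟪v, u⟫‖ ^ 2) := Finset.sum_le_sum fun k _ => by
        rw [← mul_sub, abs_mul, abs_of_nonneg (hl0 k)]
        exact mul_le_mul_of_nonneg_left (abs_sq_sub_sq_le (hbn k) hu hv) (hl0 k)
    _ = _ := by rw [← Finset.sum_mul, hl1, one_mul]

/-- closed form for the state-independent error. -/
theorem state_independent_error_closed_form {d : ℕ} (hd : 2 ≤ d)
    (a a' : OrthonormalBasis (Fin d) ℂ H) :
    siError (⇑a) (⇑a') = ⨆ i : Fin d, Real.sqrt (1 - ‖⟪a' i, a i⟫‖ ^ 2) := by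
  have ha : ∀ i, ‖a i‖ = 1 := a.orthonormal.1
  have ha' : ∀ i, ‖a' i‖ = 1 := a'.orthonormal.1
  have hnn : 0 ≤ ⨆ i : Fin d, √(1 - ‖⟪a' i, a i⟫‖ ^ 2) :=
    Real.iSup_nonneg fun i => Real.sqrt_nonneg _
  have hle : ∀ ρ : {ρ : H →ₗ[ℂ] H // IsDensity ρ},
      sdError a a' ρ.1 ≤ ⨆ i : Fin d, √(1 - ‖⟪a' i, a i⟫‖ ^ 2) := fun ρ =>
    Real.iSup_le (fun i => (norm_trace_le ρ.2 (ha i) (ha' i)).trans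
      (le_ciSup (f := fun i => √(1 - ‖⟪a' i, a i⟫‖ ^ 2)) (Set.finite_range _).bddAbove i)) hnn
  have hsd : ∀ ρ : H →ₗ[ℂ] H, 0 ≤ sdError a a' ρ := fun ρ =>
    Real.iSup_nonneg fun i => norm_nonneg _
  have hsi : 0 ≤ siError a a' := Real.iSup_nonneg fun ρ => hsd ρ.1
  refine le_antisymm (Real.iSup_le hle hnn) (Real.iSup_le (fun i => ?_) hsi)
  rcases (Real.sqrt_nonneg (1 - ‖⟪a' i, a i⟫‖ ^ 2)).eq_or_lt with h0 | h0
  · rwa [← h0]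
  obtain ⟨e, he, hval⟩ := exists_unit_attaining (ha i) (ha' i) h0
  have hbdd : BddAbove (Set.range fun ρ : {ρ : H →ₗ[ℂ] H // IsDensity ρ} => sdError a a' ρ.1) :=
    ⟨_, Set.forall_mem_range.2 hle⟩
  refine le_trans ?_ (le_ciSup hbdd ⟨ketbra e, isDensity_ketbra he⟩)
  refine le_trans (le_of_eq ?_) (le_ciSup
    (f := fun i => ‖LinearMap.trace ℂ H (ketbra e ∘ₗ (ketbra (a i) - ketbra (a' i)))‖)
    (Set.finite_range _).bddAbove i)
  rw [LinearMap.comp_sub, map_sub, trace_comp_ketbra, trace_comp_ketbra, inner_ketbra_self,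
    inner_ketbra_self, ← Complex.ofReal_sub, hval, Complex.norm_real, Real.norm_eq_abs,
    abs_of_pos h0]
end
end

section
/- Equality η(𝒜',ℬ) = 1 − 1/d holds if and only if there exists an index i such that b_i is unbiased with respect to the basis {a'_j}_{j=1}^d, i.e., |⟨a'_j, b_i⟩|² = 1/d for every j. -/
/-!
Write `p j = ‖⟪a j, b⟫‖²` for a unit vector `b`, `D` for the associated disturbance operator,
and `μ = 1 - 1/d`. By Cauchy–Schwarz with weights `p j + μ`,
`‖⟪b, v⟫‖² ≤ S (∑ p j ‖⟪a j, v⟫‖² + μ ‖v‖²)` with `S = ∑ p j / (p j + μ)`. Strict concavity of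
`t ↦ t / (t + μ)`, in the form of its tangent line at `t = 1/d`, gives `S ≤ 1`, with equality only
when `p` is uniform (`secular_le_one`, `secular_lt_one`). Hence `D ≤ S μ` (`dform_le`).

For the bound from below, given a unit vector `v`, let `e` be the normalised component of `b`
orthogonal to `v`. Since `b` lies in the span of `v` and `e`, and `D` is `|b⟩⟨b|` minus a positive
operator of trace one, `⟪v, D v⟫ + ⟪e, D e⟫ ≥ 0`; so `-⟪v, D v⟫ ≤ ⟪e, D e⟫ ≤ S μ`
(`neg_dform_le`). Diagonalising `ρ` then yields `|tr (ρ D)| ≤ S μ` for every state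
(`norm_trace_le`). In the unbiased case the bound `μ` is attained at `ρ = |b⟩⟨b|`; if no `b i` is
unbiased, all the finitely many bounds `S μ` are strictly smaller than `μ`.
-/

open scoped ComplexInnerProductSpace

noncomputable section

variable {H : Type*} [NormedAddCommGroup H] [InnerProductSpace ℂ H] [FiniteDimensional ℂ H]
variable {ι ι' : Type*} [Fintype ι] [Fintype ι']

/-- The quadratic form `⟪v, D v⟫` of the disturbance operator
`D = |b⟩⟨b| - ∑ j, |⟪a j, b⟫|² |a j⟩⟨a j|`, as a real number. -/
def dform {d : ℕ} (a : OrthonormalBasis (Fin d) ℂ H) (b v : H) : ℝ :=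
  ‖⟪b, v⟫‖ ^ 2 - ∑ j, ‖⟪a j, b⟫‖ ^ 2 * ‖⟪a j, v⟫‖ ^ 2

/-- The left-hand side `∑ j, p j / (p j + μ)` of the secular equation `∑ j, p j / (p j + μ) = 1`
of the disturbance operator, evaluated at `μ = 1 - 1/d`, where `p j = ‖⟪a j, b⟫‖²`. -/
def secular {d : ℕ} (a : OrthonormalBasis (Fin d) ℂ H) (b : H) : ℝ :=
  ∑ j, ‖⟪a j, b⟫‖ ^ 2 / (‖⟪a j, b⟫‖ ^ 2 + (1 - 1 / (d : ℝ)))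

lemma one_sub_inv_pos {d : ℕ} (hd : 2 ≤ d) : 0 < 1 - 1 / (d : ℝ) := by
  have hd' : (2 : ℝ) ≤ d := by exact_mod_cast hd
  rw [sub_pos, div_lt_one (by linarith)]; linarith

lemma secular_nonneg {d : ℕ} (a : OrthonormalBasis (Fin d) ℂ H) (hd : 2 ≤ d) (b : H) :
    0 ≤ secular a b := by
  have := one_sub_inv_pos hd
  exact Finset.sum_nonneg fun j _ => by positivity

/-- The graph of `t ↦ t / (t + μ)` lies below its tangent at `c`, when `c + μ = 1`. -/
lemma div_le_tangent {c p : ℝ} (hc : c < 1) (hp : 0 ≤ p) :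
    p / (p + (1 - c)) ≤ c ^ 2 + (1 - c) * p := by
  rw [div_le_iff₀ (by linarith)]
  nlinarith [mul_nonneg (sub_pos.2 hc).le (sq_nonneg (p - c))]

lemma div_lt_tangent {c p : ℝ} (hc : c < 1) (hp : 0 ≤ p) (hne : p ≠ c) :
    p / (p + (1 - c)) < c ^ 2 + (1 - c) * p := by
  rw [div_lt_iff₀ (by linarith)]
  have : 0 < (p - c) ^ 2 := by have := sub_ne_zero.2 hne; positivity
  nlinarith [mul_pos (sub_pos.2 hc) this]

/-- Since `p` has mean `c = 1/d`, the tangent line at `c` sums to `1`. -/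
lemma sum_tangent {d : ℕ} (a : OrthonormalBasis (Fin d) ℂ H) (hd : 2 ≤ d) {b : H}
    (hb : ‖b‖ = 1) :
    ∑ j, ((1 / (d : ℝ)) ^ 2 + (1 - 1 / (d : ℝ)) * ‖⟪a j, b⟫‖ ^ 2) = 1 := by
  have hd' : (2 : ℝ) ≤ d := by exact_mod_cast hd
  have : (d : ℝ) ≠ 0 := by linarith
  rw [Finset.sum_add_distrib, ← Finset.mul_sum, a.sum_sq_norm_inner_right, hb]
  simp
  field_simp
  ring

lemma secular_le_one {d : ℕ} (a : OrthonormalBasis (Fin d) ℂ H) (hd : 2 ≤ d) {b : H}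
    (hb : ‖b‖ = 1) : secular a b ≤ 1 := by
  rw [← sum_tangent a hd hb]
  exact Finset.sum_le_sum fun j _ =>
    div_le_tangent (sub_pos.1 (one_sub_inv_pos hd)) (sq_nonneg _)

lemma secular_lt_one {d : ℕ} (a : OrthonormalBasis (Fin d) ℂ H) (hd : 2 ≤ d) {b : H}
    (hb : ‖b‖ = 1) (hne : ∃ j, ‖⟪a j, b⟫‖ ^ 2 ≠ 1 / (d : ℝ)) : secular a b < 1 := by
  obtain ⟨j, hj⟩ := hne
  have hc := sub_pos.1 (one_sub_inv_pos hd)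
  rw [← sum_tangent a hd hb]
  exact Finset.sum_lt_sum (fun j _ => div_le_tangent hc (sq_nonneg _))
    ⟨j, Finset.mem_univ j, div_lt_tangent hc (sq_nonneg _) hj⟩

lemma dform_le {d : ℕ} (a : OrthonormalBasis (Fin d) ℂ H) (hd : 2 ≤ d) {b v : H}
    (hb : ‖b‖ = 1) (hv : ‖v‖ = 1) : dform a b v ≤ secular a b * (1 - 1 / (d : ℝ)) := by
  have hmu := one_sub_inv_pos hd
  set μ : ℝ := 1 - 1 / (d : ℝ) with hmudef
  have h1 : ‖⟪b, v⟫‖ ≤ ∑ j, ‖⟪a j, b⟫‖ * ‖⟪a j, v⟫‖ := by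
    rw [← a.sum_inner_mul_inner b v]
    refine (norm_sum_le _ _).trans (le_of_eq (Finset.sum_congr rfl fun j _ => ?_))
    rw [norm_mul, norm_inner_symm]
  have h2 : (∑ j, ‖⟪a j, b⟫‖ * ‖⟪a j, v⟫‖) ^ 2 ≤
      secular a b * ∑ j, (‖⟪a j, b⟫‖ ^ 2 + μ) * ‖⟪a j, v⟫‖ ^ 2 := by
    refine Finset.sum_sq_le_sum_mul_sum_of_sq_le_mul _ (fun j _ => ?_) (fun j _ => ?_)
      (fun j _ => ?_)
    · positivity
    · positivity
    · have : ‖⟪a j, b⟫‖ ^ 2 + μ ≠ 0 := by positivity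
      refine le_of_eq ?_
      rw [← hmudef]
      field_simp
  have h3 : ∑ j, (‖⟪a j, b⟫‖ ^ 2 + μ) * ‖⟪a j, v⟫‖ ^ 2 =
      (∑ j, ‖⟪a j, b⟫‖ ^ 2 * ‖⟪a j, v⟫‖ ^ 2) + μ := by
    simp only [add_mul, Finset.sum_add_distrib, ← Finset.mul_sum]
    rw [a.sum_sq_norm_inner_right, hv]; ring
  have h4 : ‖⟪b, v⟫‖ ^ 2 ≤ (∑ j, ‖⟪a j, b⟫‖ * ‖⟪a j, v⟫‖) ^ 2 := by gcongr
  have h5 : 0 ≤ ∑ j, ‖⟪a j, b⟫‖ ^ 2 * ‖⟪a j, v⟫‖ ^ 2 :=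
    Finset.sum_nonneg fun j _ => by positivity
  rw [h3] at h2
  have := secular_le_one a hd hb
  unfold dform
  nlinarith

lemma neg_dform_le {d : ℕ} (a : OrthonormalBasis (Fin d) ℂ H) (hd : 2 ≤ d) {b v : H}
    (hb : ‖b‖ = 1) (hv : ‖v‖ = 1) : -dform a b v ≤ secular a b * (1 - 1 / (d : ℝ)) := by
  have hvv : ⟪v, v⟫ = 1 := by rw [inner_self_eq_norm_sq_to_K, hv]; simp
  have hsum : ∑ j, ‖⟪a j, b⟫‖ ^ 2 = 1 := by rw [a.sum_sq_norm_inner_right, hb]; norm_num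
  obtain ⟨r, hr⟩ : ∃ r, r = b - ⟪v, b⟫ • v := ⟨_, rfl⟩
  have hvr : ⟪v, r⟫ = 0 := by rw [hr, inner_sub_right, inner_smul_right, hvv]; simp
  have hbr : b = ⟪v, b⟫ • v + r := by rw [hr]; abel
  have hpyth : ‖⟪b, v⟫‖ ^ 2 + ‖r‖ ^ 2 = 1 := by
    have h := norm_add_sq_eq_norm_sq_add_norm_sq_of_inner_eq_zero (𝕜 := ℂ) (⟪v, b⟫ • v) r
      (by rw [inner_smul_left, hvr, mul_zero])
    rw [← hbr, hb, norm_smul, hv, norm_inner_symm] at h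
    nlinarith
  by_cases hr0 : r = 0
  · have hle : ∑ j, ‖⟪a j, b⟫‖ ^ 2 * ‖⟪a j, v⟫‖ ^ 2 ≤ 1 := by
      rw [← hsum]
      refine Finset.sum_le_sum fun j _ => mul_le_of_le_one_right (sq_nonneg _) ?_
      have := norm_inner_le_norm (𝕜 := ℂ) (a j) v
      rw [hv, a.orthonormal.1 j, mul_one] at this
      exact pow_le_one₀ (norm_nonneg _) this
    have := mul_nonneg (secular_nonneg a hd b) (one_sub_inv_pos hd).le
    rw [hr0, norm_zero] at hpyth
    unfold dform
    linarith
  · have hrn : ‖r‖ ≠ 0 := norm_ne_zero_iff.2 hr0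
    obtain ⟨e, he⟩ : ∃ e, e = ((‖r‖⁻¹ : ℝ) : ℂ) • r := ⟨_, rfl⟩
    have hen : ‖e‖ = 1 := by
      rw [he, norm_smul, Complex.norm_real, norm_inv, norm_norm, inv_mul_cancel₀ hrn]
    have hve : ⟪v, e⟫ = 0 := by rw [he, inner_smul_right, hvr, mul_zero]
    have hbe : ‖⟪b, e⟫‖ ^ 2 = ‖r‖ ^ 2 := by
      have : ⟪b, e⟫ = (‖r‖ : ℂ) := by
        rw [hbr, inner_add_left, inner_smul_left, hve, mul_zero, zero_add, he, inner_smul_right,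
          inner_self_eq_norm_sq_to_K]
        have : (‖r‖ : ℂ) ≠ 0 := by exact_mod_cast hrn
        push_cast
        simp only [Complex.coe_algebraMap]
        field_simp
      rw [this, Complex.norm_real, norm_norm]
    have horth : Orthonormal ℂ ![v, e] := by
      rw [orthonormal_vecCons_iff]
      refine ⟨hv, fun i => ?_, ?_⟩
      · fin_cases i; simpa using hve
      · rw [orthonormal_vecCons_iff]
        exact ⟨hen, fun i => i.elim0, ⟨fun i => i.elim0, fun i => i.elim0⟩⟩
    have hle : ∑ j, ‖⟪a j, b⟫‖ ^ 2 * ‖⟪a j, v⟫‖ ^ 2 + ∑ j, ‖⟪a j, b⟫‖ ^ 2 * ‖⟪a j, e⟫‖ ^ 2 ≤ 1 := by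
      rw [← hsum, ← Finset.sum_add_distrib]
      refine Finset.sum_le_sum fun j _ => ?_
      rw [← mul_add]
      refine mul_le_of_le_one_right (sq_nonneg _) ?_
      have := horth.sum_inner_products_le (x := a j) (s := Finset.univ)
      simp only [Fin.sum_univ_two, Matrix.cons_val_zero, Matrix.cons_val_one,
        a.orthonormal.1 j, one_pow] at this
      rwa [norm_inner_symm, norm_inner_symm (a j) e]
    have hup := dform_le a hd hb hen
    unfold dform at hup ⊢
    linarith

lemma inner_distOp {d : ℕ} (a b : OrthonormalBasis (Fin d) ℂ H) (i : Fin d) (v : H) :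
    ⟪v, distOp a b i v⟫ = (dform a (b i) v : ℂ) := by
  have key : ∀ w : H, ⟪v, ketbra w v⟫ = (‖⟪w, v⟫‖ ^ 2 : ℂ) := by
    intro w
    change ⟪v, ⟪w, v⟫ • w⟫ = _
    rw [inner_smul_right, ← inner_conj_symm v w, Complex.mul_conj']
  unfold distOp dform
  simp only [LinearMap.sub_apply, LinearMap.sum_apply, LinearMap.smul_apply, inner_sub_right,
    inner_sum, inner_smul_right, key]
  push_cast
  rfl

lemma trace_ketbra_comp (v : H) (T : H →ₗ[ℂ] H) :
    LinearMap.trace ℂ H (ketbra v ∘ₗ T) = ⟪v, T v⟫ := by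
  rw [LinearMap.trace_comp_comm', LinearMap.trace_eq_sum_inner _ (stdOrthonormalBasis ℂ H)]
  have : ∀ k, ⟪stdOrthonormalBasis ℂ H k, (T ∘ₗ ketbra v) (stdOrthonormalBasis ℂ H k)⟫ =
      ⟪v, stdOrthonormalBasis ℂ H k⟫ * ⟪stdOrthonormalBasis ℂ H k, T v⟫ := by
    intro k
    change ⟪_, T (⟪v, _⟫ • v)⟫ = _
    rw [map_smul, inner_smul_right]
  simp only [this]
  exact (stdOrthonormalBasis ℂ H).sum_inner_mul_inner _ _

lemma isDensity_ketbra_s3 {v : H} (hv : ‖v‖ = 1) : IsDensity (ketbra v) := by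
  refine ⟨fun x y => ?_, fun x => ?_, ?_⟩
  · change ⟪⟪v, x⟫ • v, y⟫ = ⟪x, ⟪v, y⟫ • v⟫
    rw [inner_smul_left, inner_smul_right, inner_conj_symm]; ring
  · change 0 ≤ (⟪x, ⟪v, x⟫ • v⟫).re
    rw [inner_smul_right, ← inner_conj_symm x v, Complex.mul_conj]
    exact Complex.normSq_nonneg _
  · have := trace_ketbra_comp v LinearMap.id
    rw [LinearMap.comp_id] at this
    rw [this, LinearMap.id_apply, inner_self_eq_norm_sq_to_K, hv]; simp

lemma norm_trace_le_s3 {d : ℕ} (a b : OrthonormalBasis (Fin d) ℂ H) (hd : 2 ≤ d)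
    {ρ : H →ₗ[ℂ] H} (hρ : IsDensity ρ) (i : Fin d) :
    ‖LinearMap.trace ℂ H (ρ ∘ₗ distOp a b i)‖ ≤ secular a (b i) * (1 - 1 / (d : ℝ)) := by
  obtain ⟨hs, hpos, htr⟩ := hρ
  obtain ⟨e, he⟩ : ∃ e, e = hs.eigenvectorBasis rfl := ⟨_, rfl⟩
  obtain ⟨w, hw⟩ : ∃ w, w = hs.eigenvalues rfl := ⟨_, rfl⟩
  have hev : ∀ k, ρ (e k) = (w k : ℂ) • e k := fun k => by
    rw [he, hw]; exact hs.apply_eigenvectorBasis rfl k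
  have hen : ∀ k, ‖e k‖ = 1 := e.orthonormal.1
  have hee : ∀ k, ⟪e k, e k⟫ = 1 := fun k => by
    rw [inner_self_eq_norm_sq_to_K, hen]; simp
  have hw0 : ∀ k, 0 ≤ w k := fun k => by
    have := hpos (e k)
    rw [hev, inner_smul_right, hee, mul_one] at this
    simpa using this
  have hw1 : ∑ k, w k = 1 := by
    rw [LinearMap.trace_eq_sum_inner _ e] at htr
    simp only [hev, inner_smul_right, hee, mul_one] at htr
    exact_mod_cast htr
  rw [LinearMap.trace_eq_sum_inner _ e]
  have hterm : ∀ k, ⟪e k, (ρ ∘ₗ distOp a b i) (e k)⟫ = ((w k * dform a (b i) (e k) : ℝ) : ℂ) := by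
    intro k
    rw [LinearMap.comp_apply, ← hs, hev, inner_smul_left, inner_distOp, Complex.conj_ofReal]
    push_cast; rfl
  simp only [hterm]
  have hb : ‖b i‖ = 1 := b.orthonormal.1 i
  calc _ ≤ ∑ k, ‖((w k * dform a (b i) (e k) : ℝ) : ℂ)‖ := norm_sum_le _ _
    _ ≤ ∑ k, w k * (secular a (b i) * (1 - 1 / (d : ℝ))) := by
        refine Finset.sum_le_sum fun k _ => ?_
        rw [Complex.norm_real, Real.norm_eq_abs, abs_mul, abs_of_nonneg (hw0 k)]
        refine mul_le_mul_of_nonneg_left (abs_le'.2 ⟨?_, ?_⟩) (hw0 k)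
        · exact dform_le a hd hb (hen k)
        · exact neg_dform_le a hd hb (hen k)
    _ = _ := by rw [← Finset.sum_mul, hw1, one_mul]

/-- equality `η(𝒜',ℬ) = 1 - 1/d` holds iff some `b_i` is unbiased in `{a'_j}`. -/
theorem state_independent_disturbance_eq_iff {d : ℕ} (hd : 2 ≤ d)
    (a' b : OrthonormalBasis (Fin d) ℂ H) :
    siDist (⇑a') (⇑b) = 1 - 1 / (d : ℝ) ↔
      ∃ i : Fin d, ∀ j : Fin d, ‖⟪a' j, b i⟫‖ ^ 2 = 1 / (d : ℝ) := by
  have hd' : (2 : ℝ) ≤ d := by exact_mod_cast hd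
  have hlam : 0 < 1 - 1 / (d : ℝ) := by
    rw [sub_pos, div_lt_one (by linarith)]; linarith
  have hb : ∀ i, ‖b i‖ = 1 := fun i => b.orthonormal.1 i
  constructor
  · intro h
    by_contra hcon
    push Not at hcon
    -- The strict bounds for the finitely many `i` have a common strict bound, their maximum.
    have : Nonempty (Fin d) := ⟨⟨0, by omega⟩⟩
    obtain ⟨i₀, hi₀⟩ := Finite.exists_max fun i => secular a' (b i)
    have hlt := secular_lt_one a' hd (hb i₀) (hcon i₀)
    have hle : siDist (⇑a') (⇑b) ≤ secular a' (b i₀) * (1 - 1 / (d : ℝ)) := by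
      have h0 := mul_nonneg (secular_nonneg a' hd (b i₀)) hlam.le
      refine Real.iSup_le (fun ρ => Real.iSup_le (fun i => ?_) h0) h0
      refine (norm_trace_le_s3 a' b hd ρ.2 i).trans ?_
      exact mul_le_mul_of_nonneg_right (hi₀ i) hlam.le
    nlinarith
  · rintro ⟨i, hi⟩
    have hbd : ∀ ρ : {ρ : H →ₗ[ℂ] H // IsDensity ρ}, sdDist a' b ρ.1 ≤ 1 - 1 / (d : ℝ) := by
      intro ρ
      refine Real.iSup_le (fun k => (norm_trace_le_s3 a' b hd ρ.2 k).trans ?_) hlam.le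
      have := secular_le_one a' hd (hb k)
      nlinarith
    refine le_antisymm (Real.iSup_le hbd hlam.le) ?_
    -- The pure state `b i` attains the bound.
    refine le_ciSup_of_le ⟨_, Set.forall_mem_range.2 hbd⟩
      ⟨ketbra (b i), isDensity_ketbra_s3 (hb i)⟩ ?_
    refine le_ciSup_of_le (Set.finite_range _).bddAbove i ?_
    rw [trace_ketbra_comp, inner_distOp, Complex.norm_real, Real.norm_eq_abs]
    refine le_trans (le_of_eq ?_) (le_abs_self _)
    unfold dform
    simp only [hi, inner_self_eq_norm_sq_to_K, hb]
    have : (d : ℝ) ≠ 0 := by linarith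
    simp
    field_simp
end
end
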